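/- Let X be a real Banach space which is not quasi-reflexive and which contains an infinite-dimensional closed subspace with separable dual. For k = 0, 1, 2, ... put n_k = k(k+1)/2. Then there exist sequences (u_i)_{i≥0}, (x_i)_{i≥0} in X and (u_i*)_{i≥0}, (x_i*)_{i≥0} in X* such that: (1) the combined system is biorthogonal, i.e., u_i*(u_j) = δ_{ij}, u_i*(x_j) = 0, x_i*(x_j) = δ_{ij}, x_i*(u_j) = 0 for all i, j, and both the vectors and the functionals are uniformly bounded in norm; (2) the closed linear span U of (u_i)_{i≥0} has separable dual U*, and the restrictions of the functionals u_i* to U have dense linear span in U*; (3) the set { ∑_{p=j}^{k} x_{n_p + j} : 0 ≤ j ≤ k < ∞ } is bounded in norm. -/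

import Mathlib

open NormedSpace

/-- The weak* derived set of a subset of the dual. -/
noncomputable def wStarDerived {X : Type*} [NormedAddCommGroup X] [NormedSpace ℝ X]
    (A : Set (StrongDual ℝ X)) : Set (StrongDual ℝ X) :=
  ⋃ n : ℕ, {f : StrongDual ℝ X |
    StrongDual.toWeakDual f ∈ closure (StrongDual.toWeakDual '' (A ∩ {g : StrongDual ℝ X | ‖g‖ ≤ n}))}

/-- The weak* closure. -/
noncomputable def wStarClosure {X : Type*} [NormedAddCommGroup X] [NormedSpace ℝ X]
    (A : Set (StrongDual ℝ X)) : Set (StrongDual ℝ X) :=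
  {f : StrongDual ℝ X | StrongDual.toWeakDual f ∈ closure (StrongDual.toWeakDual '' A)}

/-- Quasi-reflexivity. -/
def QuasiReflexive (X : Type*) [NormedAddCommGroup X] [NormedSpace ℝ X] : Prop :=
  FiniteDimensional ℝ
    (StrongDual ℝ (StrongDual ℝ X) ⧸ LinearMap.range ((inclusionInDoubleDual ℝ X) : X →ₗ[ℝ] StrongDual ℝ (StrongDual ℝ X)))

/-- Restriction map to a subspace. -/
noncomputable def restrictMap {X : Type*} [NormedAddCommGroup X] [NormedSpace ℝ X]
    (Z : Submodule ℝ X) (f : StrongDual ℝ X) : StrongDual ℝ Z :=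
  f.comp Z.subtypeL

/-!
Let `J : X → X**` be the canonical embedding. As `X** / J X` is infinite-dimensional, there are
bounded `F_i ∈ X**` and bounded `G_i ∈ X***` vanishing on `J X` with `G_i F_j = δ_ij`. At step `n`,
in column `c` of the triangular array, `F_n` is first replaced by some `H_n ∈ F_n + J X` that kills
the finitely many functionals chosen so far. Then `u_n` is chosen in the subspace with separable
dual, in the kernel of the first `n` members of a suitable sequence of functionals, and Helly's
theorem provides `x_n*` and `s_n` that act like `G_c` and `H_c` on finitely many given elements.
Hence `x_k* s_n` is `1` if `k ≤ n` lies in column `c` and `0` otherwise, so the differences `x_n` of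
consecutive `s` in a column are biorthogonal to the `x_k*`, while their sums down a column telescope
to a single `s`.
-/

theorem exists_seq_forall_of_forall_extend {α : Type*} [Nonempty α] {Q : ℕ → α → Prop}
    {R : ℕ → ℕ → α → α → Prop}
    (extend : ∀ (n : ℕ) (f : ℕ → α), (∀ i < n, Q i (f i)) →
      (∀ i < n, ∀ j < n, R i j (f i) (f j)) →
      ∃ a, Q n a ∧ R n n a a ∧ ∀ i < n, R i n (f i) a ∧ R n i a (f i)) :
    ∃ f : ℕ → α, (∀ i, Q i (f i)) ∧ ∀ i j, R i j (f i) (f j) := by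
  choose! next Q_next R_self R_next using extend
  let F : ℕ → ℕ → α := Nat.rec (fun _ => Classical.arbitrary α) fun n g =>
    Function.update g n (next n g)
  let f (n : ℕ) : α := next n (F n)
  have F_succ (n : ℕ) : F (n + 1) = Function.update (F n) n (f n) := rfl
  have F_eq {n i : ℕ} (hi : i < n) : F n i = f i := by
    induction n with
    | zero => exact absurd hi i.not_lt_zero
    | succ n ih =>
      rcases Nat.lt_succ_iff_lt_or_eq.mp hi with hi | rfl
      · rw [F_succ, Function.update_of_ne hi.ne, ih hi]
      · rw [F_succ, Function.update_self]
  have extended (n : ℕ) : (∀ i < n, Q i (f i)) ∧ ∀ i < n, ∀ j < n, R i j (f i) (f j) := by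
    induction n with
    | zero => exact ⟨fun i hi => absurd hi i.not_lt_zero, fun i hi => absurd hi i.not_lt_zero⟩
    | succ n ih =>
      have Q_lt : ∀ i < n, Q i (F n i) := fun i hi => F_eq hi ▸ ih.1 i hi
      have R_lt : ∀ i < n, ∀ j < n, R i j (F n i) (F n j) := fun i hi j hj =>
        F_eq hi ▸ F_eq hj ▸ ih.2 i hi j hj
      have R_new {i : ℕ} (hi : i < n) := F_eq hi ▸ R_next n (F n) Q_lt R_lt i hi
      simp only [Nat.lt_succ_iff_lt_or_eq]
      refine ⟨?_, ?_⟩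
      · rintro i (hi | rfl)
        exacts [ih.1 i hi, Q_next i (F i) Q_lt R_lt]
      · rintro i (hi | rfl) j (hj | rfl)
        exacts [ih.2 i hi j hj, (R_new hi).1, (R_new hj).2, R_self _ (F _) Q_lt R_lt]
  exact ⟨f, fun i => (extended (i + 1)).1 i i.lt_succ_self, fun i j =>
    (extended (max i j + 1)).2 i (by omega) j (by omega)⟩

section

variable {𝕜 : Type*} [RCLike 𝕜]

-- The norms on iterated duals are out of reach of instance synthesis at the default depth.
set_option maxSynthPendingDepth 3

section FiniteDimensionalConstraints

variable {E : Type*} [SeminormedAddCommGroup E] [NormedSpace 𝕜 E]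

theorem norm_mkQL_le_one (N : Submodule 𝕜 E) : ‖N.mkQL‖ ≤ 1 :=
  N.mkQL.opNorm_le_bound zero_le_one fun x =>
    (Submodule.Quotient.norm_mk_le N x).trans_eq (one_mul _).symm

theorem finrank_strongDual (V : Type*) [NormedAddCommGroup V] [NormedSpace 𝕜 V]
    [FiniteDimensional 𝕜 V] : Module.finrank 𝕜 (StrongDual 𝕜 V) = Module.finrank 𝕜 V :=
  (LinearMap.toContinuousLinearMap (𝕜 := 𝕜) (E := V) (F' := 𝕜)).finrank_eq.symm.trans
    Subspace.dual_finrank_eq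

theorem surjective_inclusionInDoubleDual {V : Type*} [NormedAddCommGroup V] [NormedSpace 𝕜 V]
    [FiniteDimensional 𝕜 V] : Function.Surjective (inclusionInDoubleDual 𝕜 V) :=
  ((inclusionInDoubleDualLi 𝕜).toLinearIsometryEquiv
    ((finrank_strongDual _).trans (finrank_strongDual V)).symm).surjective

-- Helly's theorem: `F` descends to the quotient of `E` by the common kernel of `S`, which is
-- finite-dimensional and hence reflexive.
theorem exists_norm_lt_forall_mem_apply_eq {S : Set (StrongDual 𝕜 E)} (hS : S.Finite)
    (F : StrongDual 𝕜 (StrongDual 𝕜 E)) {ε : ℝ} (hε : 0 < ε) :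
    ∃ x : E, ‖x‖ < ‖F‖ + ε ∧ ∀ f ∈ S, f x = F f := by
  have := hS.to_subtype
  let T : E →L[𝕜] (S → 𝕜) := ContinuousLinearMap.pi fun f => f.1
  let N : Submodule 𝕜 E := T.ker
  have : IsClosed (N : Set E) := T.isClosed_ker
  have : FiniteDimensional 𝕜 (E ⧸ N) := T.toLinearMap.quotKerEquivRange.symm.finiteDimensional
  obtain ⟨q, hq⟩ := surjective_inclusionInDoubleDual
    (F ∘L ContinuousLinearMap.precomp 𝕜 N.mkQL)
  have norm_q : ‖q‖ ≤ ‖F‖ := by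
    refine norm_le_dual_bound 𝕜 q (norm_nonneg F) fun f => ?_
    calc ‖f q‖ = ‖F (f ∘L N.mkQL)‖ := congrArg norm (DFunLike.congr_fun hq f)
      _ ≤ ‖F‖ * ‖f ∘L N.mkQL‖ := F.le_opNorm _
      _ ≤ ‖F‖ * ‖f‖ := by
        gcongr
        exact (f.opNorm_comp_le _).trans
          (mul_le_of_le_one_right (norm_nonneg f) (norm_mkQL_le_one N))
  obtain ⟨x, rfl, hx⟩ := Submodule.Quotient.norm_mk_lt q hε
  refine ⟨x, by linarith, fun f hf => ?_⟩
  have ker_le : N ≤ f.ker := fun y hy => congrFun hy ⟨f, hf⟩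
  exact DFunLike.congr_fun hq (N.liftQL f ker_le)

theorem exists_norm_le_apply_eq_one_of_forall_le_norm_sub {V : Submodule 𝕜 E} {x : E} {δ : ℝ}
    (hδ : 0 < δ) (hx : ∀ v ∈ V, δ ≤ ‖x - v‖) :
    ∃ f : StrongDual 𝕜 E, ‖f‖ ≤ δ⁻¹ ∧ f x = 1 ∧ ∀ v ∈ V, f v = 0 := by
  have le_norm : δ ≤ ‖V.mkQL x‖ := by
    refine le_of_forall_pos_lt_add fun ε hε => ?_
    obtain ⟨y, hy, norm_y⟩ := Submodule.Quotient.norm_mk_lt (V.mkQL x) hε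
    have := hx (x - y) ((Submodule.Quotient.eq V).mp hy.symm)
    rw [sub_sub_cancel] at this
    exact this.trans_lt norm_y
  have norm_pos := hδ.trans_le le_norm
  obtain ⟨g, norm_g, hg⟩ := exists_dual_vector 𝕜 (V.mkQL x) norm_pos.ne'
  refine ⟨(‖V.mkQL x‖ : 𝕜)⁻¹ • g ∘L V.mkQL, ?_, ?_, fun v hv => ?_⟩
  · calc ‖(‖V.mkQL x‖ : 𝕜)⁻¹ • g ∘L V.mkQL‖ = ‖V.mkQL x‖⁻¹ * ‖g ∘L V.mkQL‖ := by
          rw [norm_smul, norm_inv, RCLike.norm_ofReal, abs_norm]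
      _ ≤ δ⁻¹ * (‖g‖ * ‖V.mkQL‖) := by
        gcongr
        exact g.opNorm_comp_le _
      _ ≤ δ⁻¹ := by
        rw [norm_g, one_mul]
        exact mul_le_of_le_one_right (inv_nonneg.mpr hδ.le) (norm_mkQL_le_one V)
  · rw [smul_apply, ContinuousLinearMap.comp_apply, hg, smul_eq_mul,
      inv_mul_cancel₀ (RCLike.ofReal_ne_zero.mpr norm_pos.ne')]
  · have : V.mkQL v = 0 := (Submodule.Quotient.mk_eq_zero V).mpr hv
    rw [smul_apply, ContinuousLinearMap.comp_apply, this, map_zero, smul_zero]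

end FiniteDimensionalConstraints

section BiorthogonalPairs

variable {E : Type*} [NormedAddCommGroup E] [NormedSpace 𝕜 E]

theorem exists_mem_norm_le_forall_le_norm_sub {V W : Submodule 𝕜 E}
    (hV : ¬ FiniteDimensional 𝕜 V) [FiniteDimensional 𝕜 W] :
    ∃ x ∈ V, ‖x‖ ≤ 2 ∧ ∀ w ∈ W, 1 / 3 ≤ ‖x - w‖ := by
  have norm_eq : ‖(3 / 2 : 𝕜)‖ = 3 / 2 := by rw [norm_div, RCLike.norm_ofNat, RCLike.norm_ofNat]
  obtain ⟨v, norm_v, hv⟩ := exists_seq_norm_le_one_le_norm_sub' (c := (3 / 2 : 𝕜)) (R := 2)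
    (by rw [norm_eq]; norm_num) (by rw [norm_eq]; norm_num) hV
  by_contra! h
  choose w w_mem norm_sub_w using fun n => h (v n) (v n).2 (norm_v n)
  have norm_w (n : ℕ) : (⟨w n, w_mem n⟩ : W) ∈ Metric.closedBall (0 : W) 3 := by
    have := norm_sub_norm_le (w n) (v n)
    rw [norm_sub_rev] at this
    rw [mem_closedBall_zero_iff, Submodule.coe_norm]
    linarith [norm_sub_w n, show ‖(v n : E)‖ ≤ 2 from norm_v n]
  have := FiniteDimensional.proper_rclike 𝕜 W
  obtain ⟨a, -, φ, hφ, tendsto_w⟩ := tendsto_subseq_of_bounded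
    (x := fun n => (⟨w n, w_mem n⟩ : W)) Metric.isBounded_closedBall norm_w
  obtain ⟨N, hN⟩ := Metric.cauchySeq_iff'.mp tendsto_w.cauchySeq (1 / 3) (by norm_num)
  have dist_w : ‖w (φ (N + 1)) - w (φ N)‖ < 1 / 3 :=
    (dist_eq_norm (w (φ (N + 1))) (w (φ N))).symm.trans_lt (hN (N + 1) N.le_succ)
  have dist_v : 1 ≤ ‖(v (φ (N + 1)) : E) - v (φ N)‖ := hv (hφ N.lt_succ_self).ne'
  have := norm_add₃_le (a := (v (φ (N + 1)) : E) - w (φ (N + 1)))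
    (b := w (φ (N + 1)) - w (φ N)) (c := w (φ N) - v (φ N))
  rw [sub_add_sub_cancel, sub_add_sub_cancel, norm_sub_rev (w (φ N))] at this
  linarith [norm_sub_w (φ (N + 1)), norm_sub_w (φ N)]

theorem exists_mem_ker_biorthogonal {V : Submodule 𝕜 E} (hV : ¬ FiniteDimensional 𝕜 V) {P : Set E}
    (hP : P.Finite) {S : Set (StrongDual 𝕜 E)} (hS : S.Finite) :
    ∃ x ∈ V, ∃ f : StrongDual 𝕜 E, ‖x‖ ≤ 2 ∧ ‖f‖ ≤ 3 ∧ f x = 1 ∧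
      (∀ p ∈ P, f p = 0) ∧ ∀ g ∈ S, g x = 0 := by
  have := hS.to_subtype
  let T : E →L[𝕜] (S → 𝕜) := ContinuousLinearMap.pi fun g => g.1
  have hVT : ¬ FiniteDimensional 𝕜 (V ⊓ T.ker : Submodule 𝕜 E) := fun h =>
    hV (Module.Finite.iff_fg.mpr (Submodule.fg_of_fg_map_of_fg_inf_ker T.toLinearMap
      (IsNoetherian.noetherian _) (Module.Finite.iff_fg.mp h)))
  have := FiniteDimensional.span_of_finite 𝕜 hP
  obtain ⟨x, ⟨x_mem, hx⟩, norm_x, hxP⟩ :=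
    exists_mem_norm_le_forall_le_norm_sub (W := Submodule.span 𝕜 P) hVT
  obtain ⟨f, norm_f, hfx, hfP⟩ :=
    exists_norm_le_apply_eq_one_of_forall_le_norm_sub (by norm_num) hxP
  exact ⟨x, x_mem, f, norm_x, by simpa using norm_f, hfx,
    fun p hp => hfP p (Submodule.subset_span hp), fun g hg => congrFun hx ⟨g, hg⟩⟩

end BiorthogonalPairs

section BiorthogonalSequences

theorem exists_biorthogonal_seq {W : Type*} [NormedAddCommGroup W] [NormedSpace 𝕜 W]
    (hW : ¬ FiniteDimensional 𝕜 W) :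
    ∃ (w : ℕ → W) (ψ : ℕ → StrongDual 𝕜 W), (∀ i, ‖w i‖ ≤ 2) ∧ (∀ i, ‖ψ i‖ ≤ 3) ∧
      ∀ i j, ψ i (w j) = if i = j then 1 else 0 := by
  have hTop : ¬ FiniteDimensional 𝕜 (⊤ : Submodule 𝕜 W) := fun h =>
    hW (Module.Finite.equiv Submodule.topEquiv)
  obtain ⟨f, norm_f, hf⟩ := exists_seq_forall_of_forall_extend
    (Q := fun _ (a : W × StrongDual 𝕜 W) => ‖a.1‖ ≤ 2 ∧ ‖a.2‖ ≤ 3)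
    (R := fun i j a b => a.2 b.1 = if i = j then 1 else 0) fun n f _ _ => by
      have finite_lt := Set.finite_Iio n
      obtain ⟨w, -, ψ, norm_w, norm_ψ, hψ, hψf, hfw⟩ := exists_mem_ker_biorthogonal hTop
        (finite_lt.image fun i => (f i).1) (finite_lt.image fun i => (f i).2)
      refine ⟨(w, ψ), ⟨norm_w, norm_ψ⟩, by rw [if_pos rfl, hψ], fun i hi => ⟨?_, ?_⟩⟩
      · rw [if_neg hi.ne, hfw _ (Set.mem_image_of_mem _ hi)]
      · rw [if_neg hi.ne', hψf _ (Set.mem_image_of_mem _ hi)]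
  exact ⟨fun i => (f i).1, fun i => (f i).2, fun i => (norm_f i).1, fun i => (norm_f i).2, hf⟩

theorem exists_biorthogonal_seq_quotient {Y : Type*} [NormedAddCommGroup Y] [NormedSpace 𝕜 Y]
    (N : Submodule 𝕜 Y) [IsClosed (N : Set Y)] (hN : ¬ FiniteDimensional 𝕜 (Y ⧸ N)) :
    ∃ (F : ℕ → Y) (G : ℕ → StrongDual 𝕜 Y), (∀ i, ‖F i‖ ≤ 3) ∧ (∀ i, ‖G i‖ ≤ 3) ∧
      (∀ i, ∀ y ∈ N, G i y = 0) ∧ ∀ i j, G i (F j) = if i = j then 1 else 0 := by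
  obtain ⟨w, ψ, norm_w, norm_ψ, hψw⟩ := exists_biorthogonal_seq hN
  choose F mk_F norm_F using fun i => Submodule.Quotient.norm_mk_lt (w i) one_pos
  refine ⟨F, fun i => ψ i ∘L N.mkQL, fun i => by linarith [norm_F i, norm_w i], fun i => ?_,
    fun i y hy => ?_, fun i j => ?_⟩
  · calc ‖ψ i ∘L N.mkQL‖ ≤ ‖ψ i‖ * ‖N.mkQL‖ := (ψ i).opNorm_comp_le _
      _ ≤ 3 * 1 := mul_le_mul (norm_ψ i) (norm_mkQL_le_one N) (norm_nonneg _) (by norm_num)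
      _ = 3 := mul_one 3
  · have : N.mkQL y = 0 := (Submodule.Quotient.mk_eq_zero N).mpr hy
    rw [ContinuousLinearMap.comp_apply, this, map_zero]
  · rw [← hψw i j, ← mk_F j]
    rfl

end BiorthogonalSequences

section BidualConstraints

variable {X : Type*} [NormedAddCommGroup X] [NormedSpace 𝕜 X]

theorem isClosed_range_inclusionInDoubleDual [CompleteSpace X] :
    IsClosed (LinearMap.range (inclusionInDoubleDual 𝕜 X).toLinearMap :
      Set (StrongDual 𝕜 (StrongDual 𝕜 X))) :=
  (inclusionInDoubleDualLi 𝕜 (E := X)).isometry.isClosedEmbedding.isClosed_range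

theorem exists_mem_ker_biorthogonal_bidual {Z : Submodule 𝕜 X} (hZ : ¬ FiniteDimensional 𝕜 Z)
    {P : Set (StrongDual 𝕜 (StrongDual 𝕜 X))} (hP : P.Finite) {B : Set (StrongDual 𝕜 X)}
    (hB : B.Finite) :
    ∃ u ∈ Z, ∃ f : StrongDual 𝕜 X, ‖u‖ ≤ 2 ∧ ‖f‖ ≤ 4 ∧ f u = 1 ∧
      (∀ p ∈ P, p f = 0) ∧ ∀ b ∈ B, b u = 0 := by
  let J := (inclusionInDoubleDual 𝕜 X).toLinearMap
  have injective_J : Function.Injective J := (inclusionInDoubleDualLi 𝕜 (E := X)).injective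
  have hJZ : ¬ FiniteDimensional 𝕜 (Z.map J) := fun _ =>
    hZ (Module.Finite.equiv (Submodule.equivMapOfInjective J injective_J Z).symm)
  obtain ⟨-, ⟨u, u_mem, rfl⟩, Ψ, norm_u, norm_Ψ, hΨu, hΨP, hBu⟩ :=
    exists_mem_ker_biorthogonal hJZ hP (hB.image (inclusionInDoubleDual 𝕜 (StrongDual 𝕜 X)))
  obtain ⟨f, norm_f, hf⟩ := exists_norm_lt_forall_mem_apply_eq (hP.insert (J u)) Ψ one_pos
  refine ⟨u, u_mem, f, ?_, by linarith, ?_, fun p hp => ?_, fun b hb => ?_⟩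
  · exact ((inclusionInDoubleDualLi 𝕜).norm_map u).symm.trans_le norm_u
  · exact (hf _ (Set.mem_insert _ _)).trans hΨu
  · exact (hf p (Set.mem_insert_of_mem _ hp)).trans (hΨP p hp)
  · exact hBu _ (Set.mem_image_of_mem _ hb)

theorem exists_norm_sub_inclusion_lt_forall_mem_apply_eq_zero {B : Set (StrongDual 𝕜 X)}
    (hB : B.Finite) (F : StrongDual 𝕜 (StrongDual 𝕜 X)) {ε : ℝ} (hε : 0 < ε) :
    ∃ y : X, ‖F - inclusionInDoubleDual 𝕜 X y‖ < 2 * ‖F‖ + ε ∧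
      ∀ b ∈ B, (F - inclusionInDoubleDual 𝕜 X y) b = 0 := by
  obtain ⟨y, norm_y, hy⟩ := exists_norm_lt_forall_mem_apply_eq hB F hε
  refine ⟨y, ?_, fun b hb => sub_eq_zero.mpr (hy b hb).symm⟩
  calc ‖F - inclusionInDoubleDual 𝕜 X y‖ ≤ ‖F‖ + ‖inclusionInDoubleDual 𝕜 X y‖ := norm_sub_le _ _
    _ ≤ ‖F‖ + ‖y‖ := by gcongr; exact double_dual_bound 𝕜 X y
    _ < 2 * ‖F‖ + ε := by linarith

end BidualConstraints

section Blocks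

/-- One step of the construction: the vectors `u`, `s` and functionals `uStar`, `xStar` with a given
index, together with an element `H` of the bidual. The `x` of the theorem are differences of the
`s`. -/
structure Block (𝕜 X : Type*) [RCLike 𝕜] [NormedAddCommGroup X] [NormedSpace 𝕜 X] where
  u : X
  s : X
  uStar : StrongDual 𝕜 X
  xStar : StrongDual 𝕜 X
  H : StrongDual 𝕜 (StrongDual 𝕜 X)

namespace Block

variable {X : Type*} [NormedAddCommGroup X] [NormedSpace 𝕜 X]

/-- The conditions on the `n`-th block alone, relative to a subspace `Z`, functionals `φ` to be
killed by all but finitely many `u`, and functionals `G` on the bidual dual to the `H`. -/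
structure Admissible (Z : Submodule 𝕜 X) (φ : ℕ → StrongDual 𝕜 X)
    (G : ℕ → StrongDual 𝕜 (StrongDual 𝕜 (StrongDual 𝕜 X))) (n : ℕ) (a : Block 𝕜 X) : Prop where
  u_mem : a.u ∈ Z
  norm_u : ‖a.u‖ ≤ 2
  norm_s : ‖a.s‖ ≤ 8
  norm_uStar : ‖a.uStar‖ ≤ 4
  norm_xStar : ‖a.xStar‖ ≤ 4
  norm_H : ‖a.H‖ ≤ 7
  apply_u : ∀ k ≤ n, φ k a.u = 0
  apply_H : ∀ k, G k a.H = if k = n then 1 else 0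

/-- The conditions linking the functionals of the block `a` of index `i` to the vectors of the block
`b` of index `j`, where `c` assigns to each index its column. They make `b.s` behave, on the
functionals chosen so far, as the `H` of the block of index `c j`. -/
structure Compatible (c : ℕ → ℕ) (i j : ℕ) (a b : Block 𝕜 X) : Prop where
  uStar_u : a.uStar b.u = if i = j then 1 else 0
  uStar_s : a.uStar b.s = 0
  xStar_u : a.xStar b.u = 0
  xStar_s : a.xStar b.s = if i ≤ j ∧ c i = c j then 1 else 0
  H_uStar : b.H a.uStar = 0
  H_xStar : b.H a.xStar = if c i = j then 1 else 0

theorem exists_vectors_functionals {Z : Submodule 𝕜 X} (hZ : ¬ FiniteDimensional 𝕜 Z)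
    {P : Set (StrongDual 𝕜 (StrongDual 𝕜 X))} (hP : P.Finite) {B L : Set (StrongDual 𝕜 X)}
    (hB : B.Finite) (hL : L.Finite) {K : StrongDual 𝕜 (StrongDual 𝕜 X)} (hK : K ∈ P)
    {Γ : StrongDual 𝕜 (StrongDual 𝕜 (StrongDual 𝕜 X))}
    (hΓ : ∀ y, Γ (inclusionInDoubleDual 𝕜 X y) = 0) :
    ∃ (u s : X) (f g : StrongDual 𝕜 X), u ∈ Z ∧
      (‖u‖ ≤ 2 ∧ ‖s‖ < ‖K‖ + 1 ∧ ‖f‖ ≤ 4 ∧ ‖g‖ < ‖Γ‖ + 1) ∧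
      (f u = 1 ∧ f s = 0 ∧ g u = 0 ∧ g s = Γ K) ∧
      (∀ p ∈ P, p f = 0 ∧ p g = Γ p) ∧ (∀ b ∈ B, b u = 0 ∧ b s = K b) ∧ ∀ l ∈ L, l u = 0 := by
  obtain ⟨u, u_mem, f, norm_u, norm_f, hfu, hPf, hu⟩ :=
    exists_mem_ker_biorthogonal_bidual hZ hP (hB.union hL)
  obtain ⟨g, norm_g, hg⟩ :=
    exists_norm_lt_forall_mem_apply_eq (hP.insert (inclusionInDoubleDual 𝕜 X u)) Γ one_pos
  obtain ⟨s, norm_s, hs⟩ := exists_norm_lt_forall_mem_apply_eq ((hB.insert g).insert f) K one_pos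
  have f_s : f s = 0 := (hs f (.inl rfl)).trans (hPf K hK)
  have g_s : g s = Γ K := (hs g (.inr (.inl rfl))).trans (hg K (.inr hK))
  exact ⟨u, s, f, g, u_mem, ⟨norm_u, norm_s, norm_f, norm_g⟩,
    ⟨hfu, f_s, (hg _ (.inl rfl)).trans (hΓ u), g_s⟩, fun p hp => ⟨hPf p hp, hg p (.inr hp)⟩,
    fun b hb => ⟨hu b (.inl hb), hs b (.inr (.inr hb))⟩, fun l hl => hu l (.inr hl)⟩

variable {Z : Submodule 𝕜 X} {φ : ℕ → StrongDual 𝕜 X}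
  {F : ℕ → StrongDual 𝕜 (StrongDual 𝕜 X)} {G : ℕ → StrongDual 𝕜 (StrongDual 𝕜 (StrongDual 𝕜 X))}
  {c : ℕ → ℕ}

theorem exists_H (norm_F : ∀ i, ‖F i‖ ≤ 3) (hG : ∀ i y, G i (inclusionInDoubleDual 𝕜 X y) = 0)
    (hGF : ∀ i j, G i (F j) = if i = j then 1 else 0) (hc : ∀ n, c n ≤ n) (n : ℕ)
    (b : ℕ → Block 𝕜 X) (admissible : ∀ i < n, Admissible Z φ G i (b i))
    (compatible : ∀ i < n, ∀ j < n, Compatible c i j (b i) (b j)) :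
    ∃ H : ℕ → StrongDual 𝕜 (StrongDual 𝕜 X), (∀ k < n, H k = (b k).H) ∧
      ∀ k ≤ n, ‖H k‖ ≤ 7 ∧ (∀ i, G i (H k) = if i = k then 1 else 0) ∧
        ∀ i < n, H k (b i).uStar = 0 ∧ H k (b i).xStar = if c i = k then 1 else 0 := by
  have finite_lt := Set.finite_Iio n
  obtain ⟨y, norm_H, hH⟩ := exists_norm_sub_inclusion_lt_forall_mem_apply_eq_zero
    ((finite_lt.image fun i => (b i).uStar).union (finite_lt.image fun i => (b i).xStar)) (F n)
    one_pos
  have update_lt {k : ℕ} (hk : k < n) : Function.update (fun i => (b i).H) n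
      (F n - inclusionInDoubleDual 𝕜 X y) k = (b k).H := Function.update_of_ne hk.ne _ _
  refine ⟨_, fun k => update_lt, fun k hk => ?_⟩
  rcases hk.lt_or_eq with hk | rfl
  · rw [update_lt hk]
    exact ⟨(admissible k hk).norm_H, (admissible k hk).apply_H, fun i hi =>
      ⟨(compatible i hi k hk).H_uStar, (compatible i hi k hk).H_xStar⟩⟩
  · rw [Function.update_self]
    refine ⟨by linarith [norm_F k], fun i => ?_, fun i hi => ⟨?_, ?_⟩⟩
    · rw [map_sub, hG, sub_zero, hGF]
    · exact hH _ (.inl ⟨i, hi, rfl⟩)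
    · rw [if_neg ((hc i).trans_lt hi).ne]
      exact hH _ (.inr ⟨i, hi, rfl⟩)

theorem exists_extend (hZ : ¬ FiniteDimensional 𝕜 Z) (norm_F : ∀ i, ‖F i‖ ≤ 3)
    (norm_G : ∀ i, ‖G i‖ ≤ 3) (hG : ∀ i y, G i (inclusionInDoubleDual 𝕜 X y) = 0)
    (hGF : ∀ i j, G i (F j) = if i = j then 1 else 0) (hc : ∀ n, c n ≤ n) (n : ℕ)
    (b : ℕ → Block 𝕜 X) (admissible : ∀ i < n, Admissible Z φ G i (b i))
    (compatible : ∀ i < n, ∀ j < n, Compatible c i j (b i) (b j)) :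
    ∃ a, Admissible Z φ G n a ∧ Compatible c n n a a ∧
      ∀ i < n, Compatible c i n (b i) a ∧ Compatible c n i a (b i) := by
  obtain ⟨H, H_lt, hH⟩ := exists_H norm_F hG hGF hc n b admissible compatible
  have norm_H (k) (hk : k ≤ n) := (hH k hk).1
  have apply_H (i k) (hk : k ≤ n) := (hH k hk).2.1 i
  have H_uStar (i k) (hi : i < n) (hk : k ≤ n) := ((hH k hk).2.2 i hi).1
  have H_xStar (i k) (hi : i < n) (hk : k ≤ n) := ((hH k hk).2.2 i hi).2
  have finite_lt := Set.finite_Iio n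
  have finite_le := Set.finite_Iic n
  have hK : H (c n) ∈ H '' Set.Iic n := ⟨c n, hc n, rfl⟩
  obtain ⟨u, s, f, g, u_mem, ⟨norm_u, norm_s, norm_f, norm_g⟩, ⟨f_u, f_s, g_u, g_s⟩, h_fg, h_us, hφ⟩
    := exists_vectors_functionals hZ
      (((finite_lt.image fun i => inclusionInDoubleDual 𝕜 X (b i).u).union
        (finite_lt.image fun i => inclusionInDoubleDual 𝕜 X (b i).s)).union (finite_le.image H))
      ((finite_lt.image fun i => (b i).uStar).union (finite_lt.image fun i => (b i).xStar))
      (finite_le.image φ) (.inr hK) (hG (c n))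
  have H_f (k) (hk : k ≤ n) : H k f = 0 := (h_fg _ (.inr ⟨k, hk, rfl⟩)).1
  have H_g (k) (hk : k ≤ n) : H k g = if c n = k then 1 else 0 :=
    (h_fg _ (.inr ⟨k, hk, rfl⟩)).2.trans (apply_H _ k hk)
  refine ⟨⟨u, s, f, g, H n⟩, ?_, ?_, fun i hi => ⟨?_, ?_⟩⟩
  · exact ⟨u_mem, norm_u, by linarith [norm_H _ (hc n)], norm_f, by linarith [norm_G (c n)],
      norm_H n le_rfl, fun k hk => hφ _ ⟨k, hk, rfl⟩, fun k => apply_H k n le_rfl⟩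
  · exact ⟨by rw [f_u, if_pos rfl], f_s, g_u,
      by rw [g_s, apply_H _ _ (hc n), if_pos rfl, if_pos ⟨le_rfl, rfl⟩], H_f n le_rfl, H_g n le_rfl⟩
  · obtain ⟨uStar_u, uStar_s⟩ := h_us _ (.inl ⟨i, hi, rfl⟩)
    obtain ⟨xStar_u, xStar_s⟩ := h_us _ (.inr ⟨i, hi, rfl⟩)
    exact ⟨uStar_u.trans (if_neg hi.ne).symm, uStar_s.trans (H_uStar i _ hi (hc n)), xStar_u,
      by simpa only [hi.le, true_and] using xStar_s.trans (H_xStar i _ hi (hc n)),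
      H_uStar i n hi le_rfl, H_xStar i n hi le_rfl⟩
  · obtain ⟨f_u, g_u⟩ := h_fg _ (.inl (.inl ⟨i, hi, rfl⟩))
    obtain ⟨f_s, g_s⟩ := h_fg _ (.inl (.inr ⟨i, hi, rfl⟩))
    exact ⟨f_u.trans (if_neg hi.ne').symm, f_s, g_u.trans (hG _ _),
      (g_s.trans (hG _ _)).trans (if_neg fun h => hi.not_ge h.1).symm,
      H_lt i hi ▸ H_f i hi.le, H_lt i hi ▸ H_g i hi.le⟩

theorem exists_seq (hX : ¬ FiniteDimensional 𝕜 (StrongDual 𝕜 (StrongDual 𝕜 X) ⧸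
      (LinearMap.range (inclusionInDoubleDual 𝕜 X).toLinearMap).topologicalClosure))
    (hZ : ¬ FiniteDimensional 𝕜 Z) (φ : ℕ → StrongDual 𝕜 X) (hc : ∀ n, c n ≤ n) :
    ∃ (G : ℕ → StrongDual 𝕜 (StrongDual 𝕜 (StrongDual 𝕜 X))) (b : ℕ → Block 𝕜 X),
      (∀ i, Admissible Z φ G i (b i)) ∧ ∀ i j, Compatible c i j (b i) (b j) := by
  let N := (LinearMap.range (inclusionInDoubleDual 𝕜 X).toLinearMap).topologicalClosure
  have : IsClosed (N : Set (StrongDual 𝕜 (StrongDual 𝕜 X))) :=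
    Submodule.isClosed_topologicalClosure _
  obtain ⟨F, G, norm_F, norm_G, hGN, hGF⟩ := exists_biorthogonal_seq_quotient N hX
  have hG (i) (y : X) : G i (inclusionInDoubleDual 𝕜 X y) = 0 :=
    hGN i _ (Submodule.le_topologicalClosure _ ⟨y, rfl⟩)
  have : Nonempty (Block 𝕜 X) := ⟨⟨0, 0, 0, 0, 0⟩⟩
  exact ⟨G, exists_seq_forall_of_forall_extend (exists_extend hZ norm_F norm_G hG hGF hc)⟩

end Block

end Blocks

section Restriction

variable {E : Type*} [NormedAddCommGroup E] [NormedSpace 𝕜 E]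

theorem norm_restrict_le_of_le_topologicalClosure {U Z : Submodule 𝕜 E}
    (hUZ : U ≤ Z.topologicalClosure) (f : StrongDual 𝕜 E) :
    ‖f ∘L U.subtypeL‖ ≤ ‖f ∘L Z.subtypeL‖ := by
  refine ContinuousLinearMap.opNorm_le_bound _ (norm_nonneg _) fun x => ?_
  have isClosed : IsClosed {y : E | ‖f y‖ ≤ ‖f ∘L Z.subtypeL‖ * ‖y‖} :=
    isClosed_le (by fun_prop) (by fun_prop)
  exact closure_minimal (fun z hz => (f ∘L Z.subtypeL).le_opNorm ⟨z, hz⟩) isClosed (hUZ x.2)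

theorem exists_seq_forall_denseRange_restrict (Z : Submodule 𝕜 E)
    [TopologicalSpace.SeparableSpace (StrongDual 𝕜 Z)] :
    ∃ φ : ℕ → StrongDual 𝕜 E, ∀ U ≤ Z.topologicalClosure,
      DenseRange fun k => φ k ∘L U.subtypeL := by
  have extension (W : Submodule 𝕜 E) (f : StrongDual 𝕜 W) :
      ∃ g : StrongDual 𝕜 E, g ∘L W.subtypeL = f :=
    (exists_extension_norm_eq W f).imp fun g hg => ContinuousLinearMap.ext hg.1
  choose φ hφ using fun k => extension Z (TopologicalSpace.denseSeq (StrongDual 𝕜 Z) k)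
  refine ⟨φ, fun U hUZ => Metric.denseRange_iff.mpr fun f ε hε => ?_⟩
  obtain ⟨g, rfl⟩ := extension U f
  obtain ⟨k, hk⟩ := Metric.denseRange_iff.mp (TopologicalSpace.denseRange_denseSeq _)
    (g ∘L Z.subtypeL) ε hε
  refine ⟨k, lt_of_le_of_lt ?_ hk⟩
  rw [dist_eq_norm, dist_eq_norm, ← hφ, ← ContinuousLinearMap.sub_comp,
    ← ContinuousLinearMap.sub_comp]
  exact norm_restrict_le_of_le_topologicalClosure hUZ (g - φ k)

theorem restrict_eq_sum_of_biorthogonal {u : ℕ → E} {f : ℕ → StrongDual 𝕜 E}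
    (hfu : ∀ i j, f i (u j) = if i = j then 1 else 0) {U : Submodule 𝕜 E}
    (hU : U ≤ (Submodule.span 𝕜 (Set.range u)).topologicalClosure) {g : StrongDual 𝕜 E} {k : ℕ}
    (hg : ∀ j, k ≤ j → g (u j) = 0) :
    g ∘L U.subtypeL = ∑ i ∈ Finset.range k, g (u i) • f i ∘L U.subtypeL := by
  let h : StrongDual 𝕜 E := ∑ i ∈ Finset.range k, g (u i) • f i
  have eqOn_range : Set.EqOn g h (Set.range u) := by
    rintro _ ⟨j, rfl⟩
    simp only [h, sum_apply, smul_apply, hfu, smul_eq_mul, mul_ite, mul_one, mul_zero,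
      Finset.sum_ite_eq', Finset.mem_range]
    split_ifs with hj
    exacts [rfl, hg j (not_lt.mp hj)]
  calc g ∘L U.subtypeL = h ∘L U.subtypeL :=
        ContinuousLinearMap.ext fun x => ContinuousLinearMap.eqOn_closure_span eqOn_range (hU x.2)
    _ = ∑ i ∈ Finset.range k, g (u i) • f i ∘L U.subtypeL := by
        ext x
        simp only [h, ContinuousLinearMap.comp_apply, sum_apply, smul_apply]

theorem dense_span_range_restrict {u : ℕ → E} {f φ : ℕ → StrongDual 𝕜 E}
    (hfu : ∀ i j, f i (u j) = if i = j then 1 else 0) (hφu : ∀ j, ∀ k ≤ j, φ k (u j) = 0)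
    {U : Submodule 𝕜 E} (hU : U ≤ (Submodule.span 𝕜 (Set.range u)).topologicalClosure)
    (hφ : DenseRange fun k => φ k ∘L U.subtypeL) :
    Dense (Submodule.span 𝕜 (Set.range fun i => f i ∘L U.subtypeL) : Set (StrongDual 𝕜 U)) := by
  refine Dense.mono (Set.range_subset_iff.mpr fun k => ?_) hφ
  rw [restrict_eq_sum_of_biorthogonal hfu hU fun j => hφu j k]
  exact Submodule.sum_mem _ fun i _ => Submodule.smul_mem _ _ (Submodule.subset_span ⟨i, rfl⟩)

theorem separableSpace_of_dense_span {s : Set E} (hs : s.Countable)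
    (h : Dense (Submodule.span 𝕜 s : Set E)) : TopologicalSpace.SeparableSpace E := by
  rw [← TopologicalSpace.isSeparable_univ_iff, ← h.closure_eq]
  exact hs.isSeparable.span.closure

end Restriction

section TriangularArray

/-- The `p`-th triangular number `n_p`, at which the `p`-th row of the triangular array of indices
`n_p + j`, `0 ≤ j ≤ p`, starts. -/
def tri (p : ℕ) : ℕ := p * (p + 1) / 2

/-- The row of the index `i` in the triangular array: the `p` with `i = tri p + j`, `j ≤ p`. -/
def row (i : ℕ) : ℕ := Nat.findGreatest (fun p => tri p ≤ i) i

/-- The column of the index `i` in the triangular array: the `j` with `i = tri p + j`, `j ≤ p`. -/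
def col (i : ℕ) : ℕ := i - tri (row i)

theorem tri_succ (p : ℕ) : tri (p + 1) = tri p + (p + 1) := by
  rw [tri, tri, ← Nat.add_mul_div_left _ _ two_pos]
  ring_nf

theorem strictMono_tri : StrictMono tri :=
  strictMono_nat_of_lt_succ fun p => by rw [tri_succ]; omega

theorem row_tri_add {p j : ℕ} (h : j ≤ p) : row (tri p + j) = p := by
  refine Nat.findGreatest_eq_iff.mpr ⟨?_, fun _ => Nat.le_add_right _ _, fun q hpq _ hq => ?_⟩
  · exact (strictMono_tri.le_apply).trans (Nat.le_add_right _ _)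
  · have := strictMono_tri.monotone (Nat.succ_le_of_lt hpq)
    rw [Nat.succ_eq_add_one, tri_succ] at this
    omega

theorem col_tri_add {p j : ℕ} (h : j ≤ p) : col (tri p + j) = j := by
  rw [col, row_tri_add h, Nat.add_sub_cancel_left]

theorem exists_eq_tri_add (i : ℕ) : ∃ p, ∃ j ≤ p, i = tri p + j := by
  induction i with
  | zero => exact ⟨0, 0, le_rfl, rfl⟩
  | succ i ih =>
    obtain ⟨p, j, hj, rfl⟩ := ih
    rcases hj.lt_or_eq with hj | rfl
    · exact ⟨p, j + 1, hj, rfl⟩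
    · exact ⟨j + 1, 0, Nat.zero_le _, by rw [tri_succ, add_zero, add_assoc]⟩

theorem col_le (i : ℕ) : col i ≤ i := Nat.sub_le _ _

variable {E : Type*}

/-- The difference of the value of `s` at `i` and the value at the preceding entry of the column of
`i` in the triangular array, or just `s i` if `i` is the first index of its column. -/
def columnDiff [AddCommGroup E] (s : ℕ → E) (i : ℕ) : E :=
  s i - if col i < row i then s (i - row i) else 0

theorem columnDiff_tri_add_self [AddCommGroup E] (s : ℕ → E) (j : ℕ) :
    columnDiff s (tri j + j) = s (tri j + j) := by
  rw [columnDiff, row_tri_add le_rfl, col_tri_add le_rfl, if_neg (lt_irrefl j), sub_zero]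

theorem columnDiff_tri_succ_add [AddCommGroup E] (s : ℕ → E) {j p : ℕ} (hjp : j ≤ p) :
    columnDiff s (tri (p + 1) + j) = s (tri (p + 1) + j) - s (tri p + j) := by
  have pred_eq : tri (p + 1) + j - (p + 1) = tri p + j := by rw [tri_succ]; omega
  rw [columnDiff, row_tri_add (by omega), col_tri_add (by omega), if_pos (by omega), pred_eq]

theorem sum_columnDiff [AddCommGroup E] (s : ℕ → E) {j k : ℕ} (hjk : j ≤ k) :
    ∑ p ∈ Finset.Icc j k, columnDiff s (tri p + j) = s (tri k + j) := by
  induction k, hjk using Nat.le_induction with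
  | base => rw [Finset.Icc_self, Finset.sum_singleton, columnDiff_tri_add_self]
  | succ k hjk ih =>
    rw [Finset.sum_Icc_succ_top (by omega), ih, columnDiff_tri_succ_add s hjk, add_sub_cancel]

theorem map_columnDiff [AddCommGroup E] {A M : Type*} [AddCommGroup A] [FunLike M E A]
    [AddMonoidHomClass M E A] (f : M) (s : ℕ → E) (i : ℕ) :
    f (columnDiff s i) = columnDiff (fun k => f (s k)) i := by
  rw [columnDiff, columnDiff, map_sub, apply_ite f, map_zero]

theorem columnDiff_ite {A : Type*} [AddCommGroup A] (a : A) (k i : ℕ) :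
    columnDiff (fun i => if k ≤ i ∧ col k = col i then a else 0) i = if k = i then a else 0 := by
  obtain ⟨q, l, hl, rfl⟩ := exists_eq_tri_add k
  obtain ⟨p, j, hj, rfl⟩ := exists_eq_tri_add i
  have col_eq (h : tri q + l = tri p + j) : l = j := by rw [← col_tri_add hl, h, col_tri_add hj]
  rcases hj.eq_or_lt with rfl | hjp
  · rw [columnDiff_tri_add_self, col_tri_add hl, col_tri_add le_rfl]
    refine if_congr ⟨?_, fun h => ⟨h.le, col_eq h⟩⟩ rfl rfl
    rintro ⟨hle, rfl⟩
    have hql : q ≤ l := strictMono_tri.le_iff_le.mp (Nat.add_le_add_iff_right.mp hle)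
    rw [hql.antisymm hl]
  · obtain ⟨r, rfl⟩ := Nat.exists_eq_add_one_of_ne_zero (Nat.ne_zero_of_lt hjp)
    have hjr := Nat.le_of_lt_succ hjp
    rw [columnDiff_tri_succ_add _ hjr, col_tri_add hl, col_tri_add hj, col_tri_add hjr]
    by_cases hlj : l = j
    · subst hlj
      simp only [add_le_add_iff_right, add_left_inj, strictMono_tri.le_iff_le,
        strictMono_tri.injective.eq_iff, and_true]
      split_ifs <;> first | omega | simp only [sub_zero, sub_self]
    · simp only [hlj, and_false, if_false, sub_zero, mt col_eq hlj]

theorem norm_columnDiff_le [SeminormedAddCommGroup E] {s : ℕ → E} {C : ℝ}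
    (hs : ∀ i, ‖s i‖ ≤ C) (i : ℕ) : ‖columnDiff s i‖ ≤ 2 * C := by
  rw [columnDiff]
  split_ifs
  · linarith [norm_sub_le (s i) (s (i - row i)), hs i, hs (i - row i)]
  · rw [sub_zero]
    linarith [norm_nonneg (s i), hs i]

end TriangularArray

theorem stmt6_general {X : Type*} [NormedAddCommGroup X] [NormedSpace 𝕜 X]
    (hX : ¬ FiniteDimensional 𝕜 (StrongDual 𝕜 (StrongDual 𝕜 X) ⧸
      (LinearMap.range (inclusionInDoubleDual 𝕜 X).toLinearMap).topologicalClosure))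
    (hZ : ∃ Z : Submodule 𝕜 X, ¬ FiniteDimensional 𝕜 Z ∧
      TopologicalSpace.SeparableSpace (StrongDual 𝕜 Z)) :
    ∃ (u x : ℕ → X) (ustar xstar : ℕ → StrongDual 𝕜 X),
      (∀ i j, ustar i (u j) = if i = j then 1 else 0) ∧
      (∀ i j, ustar i (x j) = 0) ∧
      (∀ i j, xstar i (x j) = if i = j then 1 else 0) ∧
      (∀ i j, xstar i (u j) = 0) ∧
      (∃ C : ℝ, ∀ i, ‖u i‖ ≤ C ∧ ‖x i‖ ≤ C ∧ ‖ustar i‖ ≤ C ∧ ‖xstar i‖ ≤ C) ∧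
      (TopologicalSpace.SeparableSpace
        (StrongDual 𝕜 (Submodule.span 𝕜 (Set.range u)).topologicalClosure) ∧
       Dense (Submodule.span 𝕜 (Set.range fun i =>
          ustar i ∘L (Submodule.span 𝕜 (Set.range u)).topologicalClosure.subtypeL) :
            Set (StrongDual 𝕜 (Submodule.span 𝕜 (Set.range u)).topologicalClosure))) ∧
      (∃ M : ℝ, ∀ j k : ℕ, j ≤ k → ‖∑ p ∈ Finset.Icc j k, x (p * (p + 1) / 2 + j)‖ ≤ M) := by
  obtain ⟨Z, hZ, _⟩ := hZ
  obtain ⟨φ, hφ⟩ := exists_seq_forall_denseRange_restrict Z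
  obtain ⟨_, b, admissible, compatible⟩ := Block.exists_seq hX hZ φ col_le
  have dense := dense_span_range_restrict (fun i j => (compatible i j).uStar_u)
    (fun j => (admissible j).apply_u) le_rfl (hφ _ (Submodule.topologicalClosure_mono
      (Submodule.span_le.mpr (Set.range_subset_iff.mpr fun i => (admissible i).u_mem))))
  refine ⟨fun i => (b i).u, columnDiff fun i => (b i).s, fun i => (b i).uStar,
    fun i => (b i).xStar, fun i j => (compatible i j).uStar_u, fun i j => ?_, fun i j => ?_,
    fun i j => (compatible i j).xStar_u, ⟨16, fun i => ⟨?_, ?_, ?_, ?_⟩⟩,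
    ⟨separableSpace_of_dense_span (Set.countable_range _) dense, dense⟩, 8, fun j k hjk => ?_⟩
  · rw [map_columnDiff]
    simp only [(compatible _ _).uStar_s, columnDiff, ite_self, sub_zero]
  · simp only [map_columnDiff, (compatible _ _).xStar_s, columnDiff_ite]
  · linarith [(admissible i).norm_u]
  · linarith [norm_columnDiff_le (fun i => (admissible i).norm_s) i]
  · linarith [(admissible i).norm_uStar]
  · linarith [(admissible i).norm_xStar]
  · exact (congrArg norm (sum_columnDiff _ hjk)).trans_le (admissible _).norm_s

end

/-- Lemma on minimal systems in a non-quasi-reflexive Banach space containing an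
infinite-dimensional closed subspace with separable dual (n_k = k(k+1)/2). -/
theorem stmt6 (X : Type*) [NormedAddCommGroup X] [NormedSpace ℝ X] [CompleteSpace X]
    (hnq : ¬ QuasiReflexive X)
    (hZ : ∃ Z : Submodule ℝ X, IsClosed (Z : Set X) ∧ ¬ FiniteDimensional ℝ Z ∧
      TopologicalSpace.SeparableSpace (StrongDual ℝ Z)) :
    ∃ (u x : ℕ → X) (ustar xstar : ℕ → StrongDual ℝ X),
      -- (1) biorthogonality and uniform boundedness
      (∀ i j, ustar i (u j) = if i = j then 1 else 0) ∧
      (∀ i j, ustar i (x j) = 0) ∧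
      (∀ i j, xstar i (x j) = if i = j then 1 else 0) ∧
      (∀ i j, xstar i (u j) = 0) ∧
      (∃ C : ℝ, ∀ i, ‖u i‖ ≤ C ∧ ‖x i‖ ≤ C ∧ ‖ustar i‖ ≤ C ∧ ‖xstar i‖ ≤ C) ∧
      -- (2) the closed span U of the u_i has separable dual, and the restrictions of
      -- the u_i* to U span a dense subspace of U*
      (TopologicalSpace.SeparableSpace
        (StrongDual ℝ ((Submodule.span ℝ (Set.range u)).topologicalClosure)) ∧
       Dense (Submodule.span ℝ (Set.range fun i =>
          restrictMap ((Submodule.span ℝ (Set.range u)).topologicalClosure) (ustar i)) :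
            Set (StrongDual ℝ ((Submodule.span ℝ (Set.range u)).topologicalClosure)))) ∧
      -- (3) boundedness of the partial sums with n_p = p(p+1)/2
      (∃ M : ℝ, ∀ j k : ℕ, j ≤ k →
        ‖∑ p ∈ Finset.Icc j k, x (p * (p + 1) / 2 + j)‖ ≤ M) := by
  refine stmt6_general ?_ (hZ.imp fun Z hZ => hZ.2)
  rwa [isClosed_range_inclusionInDoubleDual.submodule_topologicalClosure_eq]
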